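/- Let L ≥ 1 be an integer, λ > 0, and let M♮ ∈ ℝ^{d_L × d_0}. Suppose the dimensions d_0, d_1, …, d_L satisfy min_{1 ≤ i ≤ L−1} d_i ≥ min{d_0, d_L}. Consider the ℓ²-regularized deep matrix factorization objective 𝓛(W_1, …, W_L) := ‖M♮ − W_L·W_{L−1}···W_1‖_F² + (λ/L)·Σ_{i=1}^L ‖W_i‖_F², where W_i ∈ ℝ^{d_i × d_{i−1}}, and the Schatten-regularized objective 𝓛_{M♮}(M) := ‖M♮ − M‖_F² + λ·‖M‖_{S^{2/L}}^{2/L} for M ∈ ℝ^{d_L × d_0}. Then: (i) for every global minimizer (W*_1, …, W*_L) of 𝓛, the product W*_L···W*_1 is a global minimizer of 𝓛_{M♮}; and (ii) for every global minimizer M* of 𝓛_{M♮}, there exists a global minimizer (W*_1, …, W*_L) of 𝓛 with W*_L···W*_1 = M*. -/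

import Mathlib

open Matrix

/-- The `i`-th largest singular value of a real matrix `A` (`0`-indexed),
i.e. the non-increasing rearrangement of the square roots of the
eigenvalues of the positive semidefinite matrix `Aᵀ A`. -/
noncomputable def singularValue {m n : ℕ} (A : Matrix (Fin m) (Fin n) ℝ) (i : Fin (min m n)) : ℝ :=
  let ev : Fin n → ℝ := fun j => Real.sqrt ((Matrix.isHermitian_conjTranspose_mul_self A).eigenvalues j)
  (ev ∘ Tuple.sort ev) ((Fin.castLE (Nat.min_le_right m n) i).rev)

/-- Frobenius norm of a real matrix. -/
noncomputable def frobNorm {m n : ℕ} (A : Matrix (Fin m) (Fin n) ℝ) : ℝ :=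
  Real.sqrt (∑ i, ∑ j, (A i j) ^ 2)

/-- `‖A‖_{S^q}^q = ∑_{i=1}^{min m n} σ_i(A)^q`. -/
noncomputable def schattenPow {m n : ℕ} (A : Matrix (Fin m) (Fin n) ℝ) (q : ℝ) : ℝ :=
  ∑ i : Fin (min m n), (singularValue A i) ^ q

/-- Schatten-`q` quasi-norm `‖A‖_{S^q} = (∑ σ_i(A)^q)^{1/q}`. -/
noncomputable def schattenNorm {m n : ℕ} (A : Matrix (Fin m) (Fin n) ℝ) (q : ℝ) : ℝ :=
  (schattenPow A q) ^ (1 / q)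

/-- `chainProd d W L = W_{L-1} * ⋯ * W_1 * W_0` (the end-to-end product of the
first `L` layers, `W_i : ℝ^{d_{i+1} × d_i}`). -/
noncomputable def chainProd (d : ℕ → ℕ) (W : ∀ i : ℕ, Matrix (Fin (d (i + 1))) (Fin (d i)) ℝ) :
    (L : ℕ) → Matrix (Fin (d L)) (Fin (d 0)) ℝ
  | 0 => 1
  | (L + 1) => W L * chainProd d W L

/-- The ℓ²-regularized deep matrix factorization objective
`𝓛(W) = ‖M♮ − W_L ⋯ W_1‖_F² + (λ/L) ∑ᵢ ‖W_i‖_F²`. -/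
noncomputable def deepLoss (L : ℕ) (lam : ℝ) (d : ℕ → ℕ)
    (Mnat : Matrix (Fin (d L)) (Fin (d 0)) ℝ)
    (W : ∀ i : ℕ, Matrix (Fin (d (i + 1))) (Fin (d i)) ℝ) : ℝ :=
  frobNorm (Mnat - chainProd d W L) ^ 2 + (lam / L) * ∑ i : Fin L, frobNorm (W i.1) ^ 2

/-- The Schatten-regularized objective
`𝓛_{M♮}(M) = ‖M♮ − M‖_F² + λ‖M‖_{S^{2/L}}^{2/L}`. -/
noncomputable def schattenLoss (L : ℕ) (lam : ℝ) {m n : ℕ}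
    (Mnat M : Matrix (Fin m) (Fin n) ℝ) : ℝ :=
  frobNorm (Mnat - M) ^ 2 + lam * schattenPow M (2 / L)

/-!
Both claims follow once `(1/L) ∑ᵢ ‖Wᵢ‖_F² ≥ ‖W_L ⋯ W_1‖_{S^{2/L}}^{2/L}` always holds and every
matrix has a factorization with equality.

For the inequality, push the right singular vectors of the product through the layers one at a time
and apply Gram–Schmidt at each stage. The `k`-th Gram–Schmidt vector measures the distance to the
span of its predecessors, so a layer `Wᵢ` multiplies its norm by at most `ρᵢₖ = ‖Wᵢ eᵢₖ‖`, where the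
`eᵢₖ` are the normalized Gram–Schmidt vectors entering that layer. The vectors start orthonormal and
end orthogonal with the singular values as norms, hence `σₖ ≤ ∏ᵢ ρᵢₖ`. By AM-GM
`σₖ^{2/L} ≤ (1/L) ∑ᵢ ρᵢₖ²`, and by Bessel's inequality `∑ₖ ρᵢₖ² ≤ ‖Wᵢ‖_F²`.

Equality is attained by splitting a compact singular value decomposition `M = U Σ Vᵀ` evenly:
`Wᵢ = Fᵢ Σ^{1/L} Fᵢ₋₁ᵀ` with `F₀ = V`, `F_L = U` and matrices with orthonormal columns in between,
which exist because every hidden dimension is at least the rank of `M`.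
-/

section GramSchmidt

open InnerProductSpace Submodule

variable {𝕜 : Type*} [RCLike 𝕜] {ι : Type*} [LinearOrder ι] [LocallyFiniteOrderBot ι]
  [WellFoundedLT ι] {E F : Type*} [NormedAddCommGroup E] [InnerProductSpace 𝕜 E]
  [NormedAddCommGroup F] [InnerProductSpace 𝕜 F]

theorem self_sub_gramSchmidt_mem_span_Iio (x : ι → E) (k : ι) :
    x k - gramSchmidt 𝕜 x k ∈ span 𝕜 (x '' Set.Iio k) := by
  rw [← span_gramSchmidt_Iio, sub_eq_of_eq_add' (gramSchmidt_def'' 𝕜 x k)]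
  exact sum_mem fun i hi => smul_mem _ _ (subset_span ⟨i, Finset.mem_Iio.1 hi, rfl⟩)

theorem inner_gramSchmidt_eq_zero_of_mem_span_Iio (x : ι → E) {k : ι} {z : E}
    (hz : z ∈ span 𝕜 (x '' Set.Iio k)) : inner 𝕜 (gramSchmidt 𝕜 x k) z = 0 := by
  have hle : span 𝕜 (x '' Set.Iio k) ≤ (𝕜 ∙ gramSchmidt 𝕜 x k)ᗮ := by
    rw [span_le]
    rintro _ ⟨j, hj, rfl⟩
    exact mem_orthogonal_singleton_iff_inner_right.2 (gramSchmidt_inv_triangular 𝕜 x hj)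
  exact mem_orthogonal_singleton_iff_inner_right.1 (hle hz)

theorem norm_gramSchmidt_le_norm_sub (x : ι → E) {k : ι} {z : E}
    (hz : z ∈ span 𝕜 (x '' Set.Iio k)) : ‖gramSchmidt 𝕜 x k‖ ≤ ‖x k - z‖ := by
  have horth : inner 𝕜 (gramSchmidt 𝕜 x k) (x k - gramSchmidt 𝕜 x k - z) = 0 :=
    inner_gramSchmidt_eq_zero_of_mem_span_Iio x
      (sub_mem (self_sub_gramSchmidt_mem_span_Iio x k) hz)
  have hpyth := norm_add_sq_eq_norm_sq_add_norm_sq_of_inner_eq_zero _ _ horth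
  rw [show gramSchmidt 𝕜 x k + (x k - gramSchmidt 𝕜 x k - z) = x k - z by abel] at hpyth
  exact le_of_sq_le_sq (by nlinarith) (norm_nonneg _)

theorem norm_gramSchmidt_map_le (T : E →ₗ[𝕜] F) (x : ι → E) (k : ι) :
    ‖gramSchmidt 𝕜 (fun j => T (x j)) k‖ ≤ ‖T (gramSchmidt 𝕜 x k)‖ := by
  have hmem : T (x k - gramSchmidt 𝕜 x k) ∈ span 𝕜 ((fun j => T (x j)) '' Set.Iio k) := by
    have := mem_map_of_mem (f := T) (self_sub_gramSchmidt_mem_span_Iio (𝕜 := 𝕜) x k)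
    rwa [map_span, Set.image_image] at this
  simpa only [map_sub, sub_sub_cancel] using norm_gramSchmidt_le_norm_sub _ hmem

theorem norm_smul_gramSchmidtNormed (x : ι → E) (k : ι) :
    (‖gramSchmidt 𝕜 x k‖ : 𝕜) • gramSchmidtNormed 𝕜 x k = gramSchmidt 𝕜 x k := by
  rcases eq_or_ne (gramSchmidt 𝕜 x k) 0 with hzero | hne
  · simp [hzero]
  · exact smul_inv_smul₀ (by simpa using hne) _

theorem norm_gramSchmidt_map_le_mul (T : E →ₗ[𝕜] F) (x : ι → E) (k : ι) :
    ‖gramSchmidt 𝕜 (fun j => T (x j)) k‖ ≤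
      ‖T (gramSchmidtNormed 𝕜 x k)‖ * ‖gramSchmidt 𝕜 x k‖ :=
  calc ‖gramSchmidt 𝕜 (fun j => T (x j)) k‖
    _ ≤ ‖T (gramSchmidt 𝕜 x k)‖ := norm_gramSchmidt_map_le T x k
    _ = ‖T (gramSchmidtNormed 𝕜 x k)‖ * ‖gramSchmidt 𝕜 x k‖ := by
      rw [← norm_smul_gramSchmidtNormed, map_smul, norm_smul, norm_smul_gramSchmidtNormed,
        RCLike.norm_ofReal, abs_norm, mul_comm]

theorem norm_gramSchmidt_le_prod_of_map {G : ℕ → Type*} [∀ i, NormedAddCommGroup (G i)]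
    [∀ i, InnerProductSpace 𝕜 (G i)] (T : ∀ i, G i →ₗ[𝕜] G (i + 1)) (x : ∀ i, ι → G i)
    (hx : ∀ i, x (i + 1) = fun k => T i (x i k)) (L : ℕ) (k : ι) :
    ‖gramSchmidt 𝕜 (x L) k‖ ≤
      (∏ i : Fin L, ‖T i (gramSchmidtNormed 𝕜 (x i) k)‖) * ‖gramSchmidt 𝕜 (x 0) k‖ := by
  induction L with
  | zero => simp
  | succ L ih =>
    rw [hx, Fin.prod_univ_castSucc, mul_comm (∏ _, _), mul_assoc]
    exact (norm_gramSchmidt_map_le_mul (T L) (x L) k).trans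
      (mul_le_mul_of_nonneg_left ih (norm_nonneg _))

theorem sum_norm_inner_gramSchmidtNormed_sq_le [Fintype ι] (x : ι → E) (w : E) :
    ∑ k, ‖inner 𝕜 (gramSchmidtNormed 𝕜 x k) w‖ ^ 2 ≤ ‖w‖ ^ 2 := by
  classical
  have hbessel := (gramSchmidtNormed_orthonormal' (𝕜 := 𝕜) x).sum_inner_products_le w
    (s := Finset.univ)
  refine (Fintype.sum_of_injective _ Subtype.val_injective _ _ (fun k hk => ?_)
    fun _ => rfl).ge.trans hbessel
  have hzero : gramSchmidtNormed 𝕜 x k = 0 := by simpa using hk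
  simp [hzero]

end GramSchmidt

section Frobenius

open InnerProductSpace

theorem frobNorm_sq {m n : ℕ} (A : Matrix (Fin m) (Fin n) ℝ) :
    frobNorm A ^ 2 = ∑ i, ∑ j, A i j ^ 2 :=
  Real.sq_sqrt (Finset.sum_nonneg fun _ _ => Finset.sum_nonneg fun _ _ => sq_nonneg _)

theorem frobNorm_sq_eq_trace {m n : ℕ} (A : Matrix (Fin m) (Fin n) ℝ) :
    frobNorm A ^ 2 = (Aᴴ * A).trace := by
  rw [frobNorm_sq, Finset.sum_comm]
  simp [Matrix.trace, Matrix.mul_apply, sq]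

theorem sum_norm_toEuclideanLin_gramSchmidtNormed_sq_le_frobNorm_sq {ι : Type*} [LinearOrder ι]
    [LocallyFiniteOrderBot ι] [WellFoundedLT ι] [Fintype ι] {m n : ℕ}
    (A : Matrix (Fin m) (Fin n) ℝ) (x : ι → EuclideanSpace ℝ (Fin n)) :
    ∑ k, ‖A.toEuclideanLin (gramSchmidtNormed ℝ x k)‖ ^ 2 ≤ frobNorm A ^ 2 := by
  have hentry (i : Fin m) (k : ι) : A.toEuclideanLin (gramSchmidtNormed ℝ x k) i =
      inner ℝ (gramSchmidtNormed ℝ x k) (WithLp.toLp 2 (A i)) := by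
    simp [Matrix.toLpLin_apply, PiLp.inner_apply, Matrix.mulVec, dotProduct]
  calc ∑ k, ‖A.toEuclideanLin (gramSchmidtNormed ℝ x k)‖ ^ 2
    _ = ∑ i, ∑ k, ‖inner ℝ (gramSchmidtNormed ℝ x k) (WithLp.toLp 2 (A i))‖ ^ 2 := by
      simp only [EuclideanSpace.norm_sq_eq, hentry]
      exact Finset.sum_comm
    _ ≤ ∑ i, ‖WithLp.toLp 2 (A i)‖ ^ 2 :=
      Finset.sum_le_sum fun i _ => sum_norm_inner_gramSchmidtNormed_sq_le x _
    _ = frobNorm A ^ 2 := by simp [EuclideanSpace.norm_sq_eq, frobNorm_sq]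

theorem frobNorm_isometry_mul_diagonal_mul_sq {ι : Type*} [Fintype ι] [DecidableEq ι] {m n : ℕ}
    {U : Matrix (Fin m) ι ℝ} {V : Matrix (Fin n) ι ℝ} (hU : Uᴴ * U = 1) (hV : Vᴴ * V = 1)
    (s : ι → ℝ) : frobNorm (U * diagonal s * Vᴴ) ^ 2 = ∑ k, s k ^ 2 := by
  have hgram : (U * diagonal s * Vᴴ)ᴴ * (U * diagonal s * Vᴴ) =
      V * (diagonal s * (Uᴴ * U) * diagonal s * Vᴴ) := by
    simp only [conjTranspose_mul, conjTranspose_conjTranspose, diagonal_conjTranspose,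
      star_trivial, Matrix.mul_assoc]
  rw [frobNorm_sq_eq_trace, hgram, trace_mul_comm, hU, Matrix.mul_one, Matrix.mul_assoc, hV,
    Matrix.mul_one, diagonal_mul_diagonal, trace_diagonal]
  simp only [sq]

end Frobenius

section SingularValueDecomposition

open scoped ComplexOrder

variable {𝕜 : Type*} [RCLike 𝕜] {m n : Type*} [Fintype n]

theorem apply_eq_sum_toEuclideanLin_mul_star [DecidableEq n] {ι : Type*} [Fintype ι]
    (A : Matrix m n 𝕜)
    (b : OrthonormalBasis ι 𝕜 (EuclideanSpace 𝕜 n)) (i : m) (j : n) :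
    A i j = ∑ k, A.toEuclideanLin (b k) i * star (b k j) := by
  calc A i j = A.toEuclideanLin (EuclideanSpace.single j 1) i := by simp [Matrix.toLpLin_apply]
    _ = A.toEuclideanLin (∑ k, inner 𝕜 (b k) (EuclideanSpace.single j 1) • b k) i := by
      rw [b.sum_repr']
    _ = ∑ k, A.toEuclideanLin (b k) i * star (b k j) := by
      simp [map_sum, EuclideanSpace.inner_single_right, mul_comm]

variable [Fintype m]

theorem conjTranspose_mul_self_eq_one_of_orthonormal {ι : Type*} [DecidableEq ι]
    {u : ι → EuclideanSpace 𝕜 m} (hu : Orthonormal 𝕜 u) :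
    (of fun i k => u k i)ᴴ * (of fun i k => u k i) = 1 := by
  ext k l
  rw [one_apply, ← orthonormal_iff_ite.1 hu k l]
  simp [Matrix.mul_apply, PiLp.inner_apply, mul_comm]

theorem exists_conjTranspose_mul_self_eq_one {ι : Type*} [Fintype ι] [DecidableEq ι]
    (hcard : Fintype.card ι ≤ Fintype.card m) : ∃ U : Matrix m ι 𝕜, Uᴴ * U = 1 := by
  classical
  obtain ⟨e⟩ := Function.Embedding.nonempty_of_card_le hcard
  exact ⟨_, conjTranspose_mul_self_eq_one_of_orthonormal
    ((EuclideanSpace.basisFun m 𝕜).orthonormal.comp e e.injective)⟩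

variable [DecidableEq n]

/-- The singular values of `A`, indexed so that the `k`-th one belongs to the `k`-th vector of
`rightSingularBasis A`. Unlike `singularValue`, the list is unsorted and has as many terms as `A`
has columns, so it may contain extra zeros. -/
noncomputable def columnSingularValue (A : Matrix m n 𝕜) (k : n) : ℝ :=
  √((isHermitian_conjTranspose_mul_self A).eigenvalues k)

/-- The right singular vectors of `A`: an orthonormal basis of eigenvectors of `Aᴴ * A`. -/
noncomputable def rightSingularBasis (A : Matrix m n 𝕜) :
    OrthonormalBasis n 𝕜 (EuclideanSpace 𝕜 n) :=
  (isHermitian_conjTranspose_mul_self A).eigenvectorBasis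

theorem columnSingularValue_nonneg (A : Matrix m n 𝕜) (k : n) : 0 ≤ columnSingularValue A k :=
  Real.sqrt_nonneg _

theorem columnSingularValue_sq (A : Matrix m n 𝕜) (k : n) :
    columnSingularValue A k ^ 2 = (isHermitian_conjTranspose_mul_self A).eigenvalues k :=
  Real.sq_sqrt ((posSemidef_conjTranspose_mul_self A).eigenvalues_nonneg k)

theorem card_columnSingularValue_ne_zero (A : Matrix m n 𝕜) :
    Fintype.card {k // columnSingularValue A k ≠ 0} = A.rank := by
  rw [← rank_conjTranspose_mul_self,
    (isHermitian_conjTranspose_mul_self A).rank_eq_card_non_zero_eigs]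
  simp only [← columnSingularValue_sq, ne_eq, sq_eq_zero_iff]

theorem inner_toEuclideanLin_rightSingularBasis (A : Matrix m n 𝕜) (k l : n) :
    inner 𝕜 (A.toEuclideanLin (rightSingularBasis A k)) (A.toEuclideanLin (rightSingularBasis A l))
      = if k = l then (columnSingularValue A k : 𝕜) ^ 2 else 0 := by
  classical
  have heigen : LinearMap.adjoint A.toEuclideanLin (A.toEuclideanLin (rightSingularBasis A l)) =
      ((columnSingularValue A l : 𝕜) ^ 2) • rightSingularBasis A l := by
    rw [← toEuclideanLin_conjTranspose_eq_adjoint]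
    ext i
    have := congrFun ((isHermitian_conjTranspose_mul_self A).mulVec_eigenvectorBasis l) i
    rw [← mulVec_mulVec, ← columnSingularValue_sq] at this
    simpa [toLpLin_apply, rightSingularBasis, RCLike.real_smul_eq_coe_mul] using this
  rw [← LinearMap.adjoint_inner_right, heigen, inner_smul_right,
    orthonormal_iff_ite.1 (rightSingularBasis A).orthonormal]
  split_ifs with hkl
  · rw [hkl, mul_one]
  · rw [mul_zero]

theorem norm_toEuclideanLin_rightSingularBasis (A : Matrix m n 𝕜) (k : n) :
    ‖A.toEuclideanLin (rightSingularBasis A k)‖ = columnSingularValue A k := by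
  have hinner := inner_toEuclideanLin_rightSingularBasis A k k
  rw [if_pos rfl, inner_self_eq_norm_sq_to_K] at hinner
  exact (sq_eq_sq₀ (norm_nonneg _) (columnSingularValue_nonneg A k)).1 (mod_cast hinner)

theorem orthonormal_inv_smul_toEuclideanLin_rightSingularBasis (A : Matrix m n 𝕜) :
    Orthonormal 𝕜 fun k : {k // columnSingularValue A k ≠ 0} =>
      (columnSingularValue A k : 𝕜)⁻¹ • A.toEuclideanLin (rightSingularBasis A k) := by
  refine ⟨fun k => ?_, fun k l hkl => ?_⟩
  · rw [norm_smul, norm_toEuclideanLin_rightSingularBasis, norm_inv, RCLike.norm_ofReal,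
      abs_of_nonneg (columnSingularValue_nonneg A k), inv_mul_cancel₀ k.2]
  · beta_reduce
    rw [inner_smul_left, inner_smul_right, inner_toEuclideanLin_rightSingularBasis,
      if_neg (Subtype.coe_injective.ne hkl), mul_zero, mul_zero]

theorem exists_compact_svd (A : Matrix m n 𝕜) :
    ∃ (U : Matrix m {k // columnSingularValue A k ≠ 0} 𝕜)
      (V : Matrix n {k // columnSingularValue A k ≠ 0} 𝕜), Uᴴ * U = 1 ∧ Vᴴ * V = 1 ∧
      A = U * diagonal (fun k : {k // columnSingularValue A k ≠ 0} =>
        (columnSingularValue A k : 𝕜)) * Vᴴ := by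
  refine ⟨_, _, conjTranspose_mul_self_eq_one_of_orthonormal
      (orthonormal_inv_smul_toEuclideanLin_rightSingularBasis A),
    conjTranspose_mul_self_eq_one_of_orthonormal
      ((rightSingularBasis A).orthonormal.comp _ Subtype.val_injective), ?_⟩
  ext i j
  rw [apply_eq_sum_toEuclideanLin_mul_star A (rightSingularBasis A) i j, Matrix.mul_apply]
  refine (Fintype.sum_of_injective _ Subtype.val_injective _ _ (fun k hk => ?_) fun k => ?_).symm
  · have hzero : A.toEuclideanLin (rightSingularBasis A k) = 0 := by
      rw [← norm_eq_zero, norm_toEuclideanLin_rightSingularBasis]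
      simpa using hk
    simp [hzero]
  · have hne : (columnSingularValue A k : 𝕜) ≠ 0 := by exact_mod_cast k.2
    simp only [mul_diagonal, of_apply, conjTranspose_apply, PiLp.smul_apply, smul_eq_mul,
      Function.comp_apply]
    field_simp

end SingularValueDecomposition

section SchattenPow

theorem eq_zero_of_antitone_of_card_ne_zero_le {α : Type*} [PartialOrder α] [Zero α]
    [DecidableEq α] {n : ℕ} {f : Fin n → α} (hf : Antitone f) (hf_nonneg : ∀ i, 0 ≤ f i)
    {j : Fin n} (hcard : Fintype.card {i // f i ≠ 0} ≤ j) : f j = 0 := by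
  by_contra hj
  have hpos : ∀ i ∈ Finset.Iic j, f i ≠ 0 := fun i hi =>
    (((hf_nonneg j).lt_of_ne' hj).trans_le (hf (Finset.mem_Iic.1 hi))).ne'
  have hle : (Finset.Iic j).card ≤ Fintype.card {i // f i ≠ 0} := by
    rw [Fintype.card_subtype]
    exact Finset.card_le_card fun i hi => by simpa using hpos i hi
  rw [Fin.card_Iic] at hle
  omega

theorem schattenPow_eq_sum_columnSingularValue_rpow {m n : ℕ} (A : Matrix (Fin m) (Fin n) ℝ)
    {q : ℝ} (hq : q ≠ 0) : schattenPow A q = ∑ k, columnSingularValue A k ^ q := by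
  set s := columnSingularValue A with hs
  let e : Fin n ≃ Fin n := Fin.revPerm.trans (Tuple.sort s)
  have hanti : Antitone (s ∘ e) := (Tuple.monotone_sort s).comp_antitone fun _ _ => Fin.rev_le_rev.2
  have hcard : Fintype.card {i // (s ∘ e) i ≠ 0} ≤ min m n := by
    have he := Fintype.card_congr
      (e.subtypeEquiv (p := fun i => (s ∘ e) i ≠ 0) (q := fun k => s k ≠ 0) fun _ => Iff.rfl)
    rw [he, hs, card_columnSingularValue_ne_zero]
    exact le_min A.rank_le_height A.rank_le_width
  rw [← e.sum_comp]
  refine Fintype.sum_of_injective _ (Fin.castLE_injective (min_le_right m n)) _ _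
    (fun j hj => ?_) fun _ => rfl
  have hj_le : min m n ≤ j := by
    by_contra! hlt
    exact hj ⟨⟨j, hlt⟩, rfl⟩
  have hzero : s (e j) = 0 := eq_zero_of_antitone_of_card_ne_zero_le hanti
    (fun _ => columnSingularValue_nonneg A _) (hcard.trans hj_le)
  rw [hzero, Real.zero_rpow hq]

end SchattenPow

section LowerBound

open InnerProductSpace

theorem prod_rpow_two_div_card_le_sum_sq_div_card {ι : Type*} [Fintype ι] [Nonempty ι] {ρ : ι → ℝ}
    (hρ : ∀ i, 0 ≤ ρ i) :
    (∏ i, ρ i) ^ (2 / Fintype.card ι : ℝ) ≤ (∑ i, ρ i ^ 2) / Fintype.card ι := by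
  have hamgm := Real.geom_mean_le_arith_mean Finset.univ (fun _ => 1) (fun i => ρ i ^ 2)
    (fun _ _ => zero_le_one) (by simp [Fintype.card_pos]) (fun _ _ => sq_nonneg _)
  simp only [Real.rpow_one, one_mul, Finset.prod_pow, Finset.sum_const, Finset.card_univ,
    nsmul_eq_mul, mul_one] at hamgm
  rwa [div_eq_mul_inv, Real.rpow_mul (Finset.prod_nonneg fun i _ => hρ i), Real.rpow_two]

variable {L : ℕ} {d : ℕ → ℕ}

theorem norm_gramSchmidt_chainProd_le_prod {ι : Type*} [LinearOrder ι] [LocallyFiniteOrderBot ι]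
    [WellFoundedLT ι] (W : ∀ i, Matrix (Fin (d (i + 1))) (Fin (d i)) ℝ)
    {v : ι → EuclideanSpace ℝ (Fin (d 0))} (hv : Orthonormal ℝ v) (k : ι) :
    ‖gramSchmidt ℝ (fun l => (chainProd d W L).toEuclideanLin (v l)) k‖ ≤
      ∏ i : Fin L, ‖(W i).toEuclideanLin
        (gramSchmidtNormed ℝ (fun l => (chainProd d W i).toEuclideanLin (v l)) k)‖ := by
  have hprod := norm_gramSchmidt_le_prod_of_map (fun i => (W i).toEuclideanLin)
    (fun i l => (chainProd d W i).toEuclideanLin (v l))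
    (fun i => funext fun l => by simp [chainProd, toLpLin_apply]) L k
  have hv_one : ‖gramSchmidt ℝ (fun l => (chainProd d W 0).toEuclideanLin (v l)) k‖ = 1 := by
    have hid : (fun l => (chainProd d W 0).toEuclideanLin (v l)) = v := by
      simp [chainProd]
    rw [hid, gramSchmidt_of_orthogonal ℝ fun a b hab => hv.2 hab, hv.1 k]
  rwa [hv_one, mul_one] at hprod

theorem columnSingularValue_chainProd_le_prod (W : ∀ i, Matrix (Fin (d (i + 1))) (Fin (d i)) ℝ)
    (k : Fin (d 0)) :
    columnSingularValue (chainProd d W L) k ≤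
      ∏ i : Fin L, ‖(W i).toEuclideanLin (gramSchmidtNormed ℝ (fun l =>
        (chainProd d W i).toEuclideanLin (rightSingularBasis (chainProd d W L) l)) k)‖ := by
  set M := chainProd d W L with hM
  have horth : Pairwise fun k l => inner ℝ (M.toEuclideanLin (rightSingularBasis M k))
      (M.toEuclideanLin (rightSingularBasis M l)) = 0 := fun k l hkl =>
    (inner_toEuclideanLin_rightSingularBasis M k l).trans (if_neg hkl)
  rw [← norm_toEuclideanLin_rightSingularBasis,
    ← congrFun (gramSchmidt_of_orthogonal ℝ horth) k, hM]
  exact norm_gramSchmidt_chainProd_le_prod W (rightSingularBasis M).orthonormal k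

theorem schattenPow_chainProd_le (hL : L ≠ 0) (W : ∀ i, Matrix (Fin (d (i + 1))) (Fin (d i)) ℝ) :
    schattenPow (chainProd d W L) (2 / L) ≤ (∑ i : Fin L, frobNorm (W i) ^ 2) / L := by
  have : NeZero L := ⟨hL⟩
  let ρ (i : Fin L) (k : Fin (d 0)) : ℝ := ‖(W i).toEuclideanLin (gramSchmidtNormed ℝ (fun l =>
    (chainProd d W i).toEuclideanLin (rightSingularBasis (chainProd d W L) l)) k)‖
  have hamgm (k : Fin (d 0)) :
      (∏ i, ρ i k) ^ (2 / L : ℝ) ≤ (∑ i, ρ i k ^ 2) / L := by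
    simpa only [Fintype.card_fin] using
      prod_rpow_two_div_card_le_sum_sq_div_card (ρ := (ρ · k)) fun i => norm_nonneg _
  calc schattenPow (chainProd d W L) (2 / L)
    _ = ∑ k, columnSingularValue (chainProd d W L) k ^ (2 / L : ℝ) :=
      schattenPow_eq_sum_columnSingularValue_rpow _ (by positivity)
    _ ≤ ∑ k, (∏ i, ρ i k) ^ (2 / L : ℝ) := by
      gcongr with k
      · exact columnSingularValue_nonneg _ k
      · exact columnSingularValue_chainProd_le_prod W k
    _ ≤ ∑ k, (∑ i, ρ i k ^ 2) / L := Finset.sum_le_sum fun k _ => hamgm k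
    _ = (∑ i, ∑ k, ρ i k ^ 2) / L := by rw [← Finset.sum_div, Finset.sum_comm]
    _ ≤ (∑ i : Fin L, frobNorm (W i) ^ 2) / L := by
      gcongr with i
      exact sum_norm_toEuclideanLin_gramSchmidtNormed_sq_le_frobNorm_sq _ _

end LowerBound

section BalancedFactorization

variable {L : ℕ} {d : ℕ → ℕ} {ι : Type*} [Fintype ι] [DecidableEq ι]

theorem exists_isometries_of_ends (hL : L ≠ 0) (hcard : ∀ i, 0 < i → i < L → Fintype.card ι ≤ d i)
    {V : Matrix (Fin (d 0)) ι ℝ} {U : Matrix (Fin (d L)) ι ℝ} (hV : Vᴴ * V = 1) (hU : Uᴴ * U = 1) :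
    ∃ F : ∀ i, Matrix (Fin (d i)) ι ℝ, F 0 = V ∧ F L = U ∧ ∀ i ≤ L, (F i)ᴴ * F i = 1 := by
  have hinner (i : ℕ) : ∃ F : Matrix (Fin (d i)) ι ℝ, 0 < i → i < L → Fᴴ * F = 1 := by
    by_cases hi : 0 < i ∧ i < L
    · obtain ⟨F, hF⟩ := exists_conjTranspose_mul_self_eq_one (𝕜 := ℝ) (m := Fin (d i)) (ι := ι)
        (by simpa using hcard i hi.1 hi.2)
      exact ⟨F, fun _ _ => hF⟩
    · exact ⟨0, fun hi₀ hiL => (hi ⟨hi₀, hiL⟩).elim⟩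
  choose F hF using hinner
  refine ⟨Function.update (Function.update F 0 V) L U, ?_, Function.update_self .., fun i hi => ?_⟩
  · rw [Function.update_of_ne hL.symm, Function.update_self]
  · rcases eq_or_ne i L with rfl | hiL
    · rwa [Function.update_self]
    rw [Function.update_of_ne hiL]
    rcases eq_or_ne i 0 with rfl | hi₀
    · rwa [Function.update_self]
    rw [Function.update_of_ne hi₀]
    exact hF i (Nat.pos_of_ne_zero hi₀) (lt_of_le_of_ne hi hiL)

theorem chainProd_isometry_mul_diagonal_mul (F : ∀ i, Matrix (Fin (d i)) ι ℝ)
    (s : ι → ℝ) (hL : 1 ≤ L) (hF : ∀ i, 0 < i → i < L → (F i)ᴴ * F i = 1) :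
    chainProd d (fun i => F (i + 1) * diagonal s * (F i)ᴴ) L =
      F L * diagonal (s ^ L) * (F 0)ᴴ := by
  induction L, hL using Nat.le_induction with
  | base => simp [chainProd]
  | succ L hL ih =>
    rw [chainProd, ih fun i hi₀ hiL => hF i hi₀ (hiL.trans L.lt_succ_self)]
    calc F (L + 1) * diagonal s * (F L)ᴴ * (F L * diagonal (s ^ L) * (F 0)ᴴ)
      _ = F (L + 1) * (diagonal s * ((F L)ᴴ * F L) * diagonal (s ^ L)) * (F 0)ᴴ := by
        simp only [Matrix.mul_assoc]
      _ = F (L + 1) * diagonal (s ^ (L + 1)) * (F 0)ᴴ := by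
        rw [hF L hL L.lt_succ_self, Matrix.mul_one, diagonal_mul_diagonal, pow_succ']
        rfl

theorem exists_chainProd_eq_and_frobNorm_sq_eq_schattenPow (hL : L ≠ 0)
    (hdim : ∀ i, 0 < i → i < L → min (d 0) (d L) ≤ d i) (M : Matrix (Fin (d L)) (Fin (d 0)) ℝ) :
    ∃ W : ∀ i, Matrix (Fin (d (i + 1))) (Fin (d i)) ℝ, chainProd d W L = M ∧
      ∀ i < L, frobNorm (W i) ^ 2 = schattenPow M (2 / L) := by
  obtain ⟨U, V, hU, hV, hM⟩ := exists_compact_svd M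
  have hcard (i : ℕ) (hi₀ : 0 < i) (hiL : i < L) :
      Fintype.card {k // columnSingularValue M k ≠ 0} ≤ d i := by
    rw [card_columnSingularValue_ne_zero]
    exact (le_min M.rank_le_width M.rank_le_height).trans (hdim i hi₀ hiL)
  obtain ⟨F, rfl, rfl, hF⟩ := exists_isometries_of_ends hL hcard hV hU
  let s (k : {k // columnSingularValue M k ≠ 0}) : ℝ := columnSingularValue M k ^ (1 / L : ℝ)
  refine ⟨fun i => F (i + 1) * diagonal s * (F i)ᴴ, ?_, fun i hi => ?_⟩
  · have hs : s ^ L = fun k => columnSingularValue M k.1 := funext fun k => by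
      simp only [s, Pi.pow_apply, one_div]
      exact Real.rpow_inv_natCast_pow (columnSingularValue_nonneg M k) hL
    rw [chainProd_isometry_mul_diagonal_mul F s (Nat.one_le_iff_ne_zero.2 hL)
      fun i _ hiL => hF i hiL.le, hs]
    exact hM.symm
  · rw [frobNorm_isometry_mul_diagonal_mul_sq (hF _ hi) (hF _ hi.le),
      schattenPow_eq_sum_columnSingularValue_rpow M (by positivity)]
    refine Fintype.sum_of_injective _ Subtype.val_injective _ _ (fun k hk => ?_) fun k => ?_
    · have hzero : columnSingularValue M k = 0 := by simpa using hk
      rw [hzero, Real.zero_rpow (by positivity)]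
    · rw [← Real.rpow_mul_natCast (columnSingularValue_nonneg M k)]
      congr 1
      ring

end BalancedFactorization

section Losses

variable {L : ℕ} {d : ℕ → ℕ}

theorem deepLoss_eq_add_mul_mean (lam : ℝ) (Mnat : Matrix (Fin (d L)) (Fin (d 0)) ℝ)
    (W : ∀ i, Matrix (Fin (d (i + 1))) (Fin (d i)) ℝ) :
    deepLoss L lam d Mnat W = frobNorm (Mnat - chainProd d W L) ^ 2 +
      lam * ((∑ i : Fin L, frobNorm (W i) ^ 2) / L) := by
  rw [deepLoss]
  ring

theorem schattenLoss_chainProd_le_deepLoss (hL : L ≠ 0) {lam : ℝ} (hlam : 0 ≤ lam)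
    (Mnat : Matrix (Fin (d L)) (Fin (d 0)) ℝ) (W : ∀ i, Matrix (Fin (d (i + 1))) (Fin (d i)) ℝ) :
    schattenLoss L lam Mnat (chainProd d W L) ≤ deepLoss L lam d Mnat W := by
  rw [schattenLoss, deepLoss_eq_add_mul_mean]
  gcongr
  exact schattenPow_chainProd_le hL W

theorem exists_chainProd_eq_and_deepLoss_eq_schattenLoss (hL : L ≠ 0) (lam : ℝ)
    (hdim : ∀ i, 0 < i → i < L → min (d 0) (d L) ≤ d i)
    (Mnat M : Matrix (Fin (d L)) (Fin (d 0)) ℝ) :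
    ∃ W : ∀ i, Matrix (Fin (d (i + 1))) (Fin (d i)) ℝ, chainProd d W L = M ∧
      deepLoss L lam d Mnat W = schattenLoss L lam Mnat M := by
  obtain ⟨W, hWM, hW⟩ := exists_chainProd_eq_and_frobNorm_sq_eq_schattenPow hL hdim M
  refine ⟨W, hWM, ?_⟩
  have hmean : (∑ i : Fin L, frobNorm (W i) ^ 2) / L = schattenPow M (2 / L) := by
    rw [Finset.sum_congr rfl fun (i : Fin L) _ => hW i i.2]
    simp [hL]
  rw [deepLoss_eq_add_mul_mean, schattenLoss, hmean, hWM]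

end Losses

/-- Equivalence between the ℓ²-regularized deep matrix factorization problem and
the Schatten-(2/L) regularized problem: (i) the end-to-end product of any global
minimizer of `𝓛` globally minimizes `𝓛_{M♮}`; (ii) any global minimizer of
`𝓛_{M♮}` is the end-to-end product of some global minimizer of `𝓛`. -/
theorem stmt5 (L : ℕ) (hL : 1 ≤ L) (lam : ℝ) (hlam : 0 < lam) (d : ℕ → ℕ)
    (hdim : ∀ i : ℕ, 1 ≤ i → i ≤ L - 1 → min (d 0) (d L) ≤ d i)
    (Mnat : Matrix (Fin (d L)) (Fin (d 0)) ℝ) :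
    (∀ W : ∀ i : ℕ, Matrix (Fin (d (i + 1))) (Fin (d i)) ℝ,
      (∀ W' : ∀ i : ℕ, Matrix (Fin (d (i + 1))) (Fin (d i)) ℝ,
        deepLoss L lam d Mnat W ≤ deepLoss L lam d Mnat W') →
      ∀ X : Matrix (Fin (d L)) (Fin (d 0)) ℝ,
        schattenLoss L lam Mnat (chainProd d W L) ≤ schattenLoss L lam Mnat X) ∧
    (∀ Mstar : Matrix (Fin (d L)) (Fin (d 0)) ℝ,
      (∀ X : Matrix (Fin (d L)) (Fin (d 0)) ℝ,
        schattenLoss L lam Mnat Mstar ≤ schattenLoss L lam Mnat X) →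
      ∃ W : ∀ i : ℕ, Matrix (Fin (d (i + 1))) (Fin (d i)) ℝ,
        (∀ W' : ∀ i : ℕ, Matrix (Fin (d (i + 1))) (Fin (d i)) ℝ,
          deepLoss L lam d Mnat W ≤ deepLoss L lam d Mnat W') ∧
        chainProd d W L = Mstar) := by
  have hL₀ : L ≠ 0 := Nat.one_le_iff_ne_zero.1 hL
  have hbound := schattenLoss_chainProd_le_deepLoss hL₀ hlam.le Mnat
  have hattain := exists_chainProd_eq_and_deepLoss_eq_schattenLoss hL₀ lam
    (fun i hi₀ hiL => hdim i hi₀ (Nat.le_sub_one_of_lt hiL)) Mnat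
  refine ⟨fun W hW X => ?_, fun Mstar hMstar => ?_⟩
  · obtain ⟨W', -, hW'⟩ := hattain X
    exact (hbound W).trans ((hW W').trans hW'.le)
  · obtain ⟨W, hWM, hW⟩ := hattain Mstar
    exact ⟨W, fun W' => hW.le.trans ((hMstar _).trans (hbound W')), hWM⟩
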